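/- Let K ⊂ ℝ^d be a compact set, let F : P_2(K) → ℝ be lower semicontinuous and convex, let τ > 0, and let μ_k ∈ P_2(K) be absolutely continuous with respect to the Lebesgue measure. Then the functional μ ↦ SW_2²(μ, μ_k)/(2τ) + F(μ) has a unique minimizer over P_2(K). -/

import Mathlib

open MeasureTheory ENNReal Metric Filter
open scoped RealInnerProductSpace NNReal

noncomputable section

/-- `ℝ^d` as a Euclidean space. -/
abbrev Ed (d : ℕ) : Type := EuclideanSpace ℝ (Fin d)

/-- `π` is a coupling of `μ` and `ν`. -/
def IsCoupling {E : Type*} [MeasurableSpace E] (π : Measure (E × E)) (μ ν : Measure E) : Prop :=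
  π.map Prod.fst = μ ∧ π.map Prod.snd = ν

/-- Squared 2-Wasserstein distance. -/
def W2sq {E : Type*} [MeasurableSpace E] [NormedAddCommGroup E] (μ ν : Measure E) : ℝ≥0∞ :=
  ⨅ (π : Measure (E × E)) (_ : IsCoupling π μ ν), ∫⁻ p, (‖p.1 - p.2‖₊ : ℝ≥0∞) ^ 2 ∂π

/-- The uniform probability measure on the unit sphere `S^{d-1}`. -/
def unifSphere (d : ℕ) : Measure (sphere (0 : Ed d) 1) :=
  ((volume : Measure (Ed d)).toSphere Set.univ)⁻¹ • (volume : Measure (Ed d)).toSphere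

/-- Projection `P^θ(x) = ⟨x, θ⟩`. -/
def proj {d : ℕ} (θ : Ed d) (x : Ed d) : ℝ := ⟪x, θ⟫

/-- Squared Sliced-Wasserstein distance. -/
def SW2sq {d : ℕ} (μ ν : Measure (Ed d)) : ℝ≥0∞ :=
  ∫⁻ θ : sphere (0 : Ed d) 1,
    W2sq (μ.map (proj (θ : Ed d))) (ν.map (proj (θ : Ed d))) ∂(unifSphere d)

/-- Sliced-Wasserstein distance. -/
def SW2 {d : ℕ} (μ ν : Measure (Ed d)) : ℝ := Real.sqrt (SW2sq μ ν).toReal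

/-- Finite second moment. -/
def FiniteSecondMoment {d : ℕ} (μ : Measure (Ed d)) : Prop :=
  ∫⁻ x, (‖x‖₊ : ℝ≥0∞) ^ 2 ∂μ < ∞

/-- `μ ∈ P_2(K)`: probability measure supported in `K` with finite second moment. -/
def MemP2 {d : ℕ} (K : Set (Ed d)) (μ : Measure (Ed d)) : Prop :=
  IsProbabilityMeasure μ ∧ μ Kᶜ = 0 ∧ FiniteSecondMoment μ

/-!
On the line, the quantile coupling shows that `W₂²(μ, ν)` is the integral over the plane of the mass
that has to cross the interval between `s` and `t`, which is explicit in the values of the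
distribution functions. This crossing mass is convex in `μ` for every `(s, t)` and depends
continuously on `μ` for almost every `(s, t)`, so `W₂²(·, ν)` is convex, and continuous on measures
carried by a fixed interval. If `ν` has no atoms, its distribution function attains every level
strictly between those of two different measures `μ₁`, `μ₂` at some point, and there the crossing
mass is strictly convex along the segment from `μ₁` to `μ₂`; hence so is `W₂²(·, ν)`.

Integrating over directions gives continuity and convexity of `SW₂²(·, ν)`. Convexity is strict when
almost all projections of `ν` are atomless, because two different measures have different
projections in a set of directions of positive measure. The probability measures on a compact set
form a compact set, so lower semicontinuity yields a minimizer, unique by strict convexity.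
-/

section ConvexityInENNReal

open Set

lemma convexOn_tsub_const (c : ℝ≥0∞) : ConvexOn ℝ≥0 univ fun x : ℝ≥0∞ => x - c := by
  refine ⟨convex_univ, fun x _ y _ a b _ _ hab => tsub_le_iff_right.2 ?_⟩
  calc a • x + b • y ≤ a • (x - c + c) + b • (y - c + c) := by gcongr <;> exact le_tsub_add
    _ = a • (x - c) + b • (y - c) + (a • c + b • c) := by simp only [smul_add]; abel
    _ = a • (x - c) + b • (y - c) + c := by rw [Convex.combo_self hab]

lemma convexOn_const_tsub (c : ℝ≥0∞) : ConvexOn ℝ≥0 univ fun x : ℝ≥0∞ => c - x := by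
  refine ⟨convex_univ, fun x _ y _ a b _ _ hab => tsub_le_iff_right.2 ?_⟩
  calc c = a • c + b • c := (Convex.combo_self hab c).symm
    _ ≤ a • (c - x + x) + b • (c - y + y) := by gcongr <;> exact le_tsub_add
    _ = a • (c - x) + b • (c - y) + (a • x + b • y) := by simp only [smul_add]; abel

variable {a b : ℝ≥0} {c x y : ℝ≥0∞}

lemma tsub_lt_of_pos_of_lt_add (hy : 0 < y) (h : x < y + c) : x - c < y := by
  rcases le_total c x with hcx | hxc
  · exact ENNReal.sub_lt_of_lt_add hcx h
  · rwa [tsub_eq_zero_of_le hxc]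

lemma convexComb_tsub_lt (ha : 0 < a) (hb : 0 < b) (hab : a + b = 1) (hxc : x < c) (hcy : c < y)
    (hy : y ≠ ∞) : (a • x + b • y) - c < a • (x - c) + b • (y - c) := by
  have hpos : 0 < b • (y - c) := smul_pos hb (tsub_pos_of_lt hcy)
  rw [tsub_eq_zero_of_le hxc.le, smul_zero, zero_add]
  refine tsub_lt_of_pos_of_lt_add hpos ?_
  calc a • x + b • y < a • c + b • y :=
        ENNReal.add_lt_add_right (nnreal_smul_ne_top hy) (smul_lt_smul_of_pos_left hxc ha)
    _ = a • c + b • (y - c + c) := by rw [tsub_add_cancel_of_le hcy.le]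
    _ = b • (y - c) + (a • c + b • c) := by rw [smul_add]; abel
    _ = b • (y - c) + c := by rw [Convex.combo_self hab]

lemma tsub_convexComb_lt (ha : 0 < a) (hb : 0 < b) (hab : a + b = 1) (hxc : x < c) (hcy : c < y) :
    c - (a • x + b • y) < a • (c - x) + b • (c - y) := by
  have hpos : 0 < a • (c - x) := smul_pos ha (tsub_pos_of_lt hxc)
  rw [tsub_eq_zero_of_le hcy.le, smul_zero, add_zero]
  refine tsub_lt_of_pos_of_lt_add hpos ?_
  calc c = a • c + b • c := (Convex.combo_self hab c).symm
    _ < a • c + b • y :=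
        ENNReal.add_lt_add_left (nnreal_smul_ne_top hcy.ne_top) (smul_lt_smul_of_pos_left hcy hb)
    _ = a • (c - x + x) + b • y := by rw [tsub_add_cancel_of_le hxc.le]
    _ = a • (c - x) + (a • x + b • y) := by rw [smul_add, add_assoc]

end ConvexityInENNReal

section LIntegralOfConvex

variable {α E : Type*} [MeasurableSpace α] {m : Measure α} [AddCommMonoid E] [Module ℝ≥0 E]
  {s : Set E} {f : E → α → ℝ≥0∞}

lemma lintegral_smul_add_smul {g h : α → ℝ≥0∞} (hg : Measurable g) (hh : Measurable h)
    (a b : ℝ≥0) : ∫⁻ t, a • g t + b • h t ∂m = a • ∫⁻ t, g t ∂m + b • ∫⁻ t, h t ∂m := by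
  simp only [ENNReal.smul_def, smul_eq_mul]
  rw [lintegral_add_left (hg.const_mul _), lintegral_const_mul _ hg, lintegral_const_mul _ hh]

lemma convexOn_lintegral (hs : Convex ℝ≥0 s) (hf : ∀ x ∈ s, Measurable (f x))
    (hconv : ∀ t, ConvexOn ℝ≥0 s (f · t)) : ConvexOn ℝ≥0 s fun x => ∫⁻ t, f x t ∂m := by
  refine ⟨hs, fun x hx y hy a b ha hb hab => ?_⟩
  rw [← lintegral_smul_add_smul (hf x hx) (hf y hy)]
  exact lintegral_mono fun t => (hconv t).2 hx hy ha hb hab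

lemma strictConvexOn_lintegral (hs : Convex ℝ≥0 s) (hf : ∀ x ∈ s, Measurable (f x))
    (hfin : ∀ x ∈ s, ∫⁻ t, f x t ∂m ≠ ∞) (hconv : ∀ t, ConvexOn ℝ≥0 s (f · t))
    (hstrict : ∀ x ∈ s, ∀ y ∈ s, x ≠ y → ∀ a b : ℝ≥0, 0 < a → 0 < b → a + b = 1 →
      ∃ᵐ t ∂m, f (a • x + b • y) t < a • f x t + b • f y t) :
    StrictConvexOn ℝ≥0 s fun x => ∫⁻ t, f x t ∂m := by
  refine ⟨hs, fun x hx y hy hxy a b ha hb hab => ?_⟩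
  have hcomb : a • x + b • y ∈ s := hs hx hy ha.le hb.le hab
  rw [← lintegral_smul_add_smul (hf x hx) (hf y hy)]
  refine lt_of_not_ge fun hge => hstrict x hx y hy hxy a b ha hb hab ?_
  have heq := ae_eq_of_ae_le_of_lintegral_le
    (.of_forall fun t => (hconv t).2 hx hy ha.le hb.le hab) (hfin _ hcomb)
    (((hf x hx).const_smul a).add ((hf y hy).const_smul b)).aemeasurable hge
  exact heq.mono fun t ht => ht.not_lt

lemma convex_setOf_and_ne_top {g : E → ℝ≥0∞} (hg : ConvexOn ℝ≥0 s g) :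
    Convex ℝ≥0 {x | x ∈ s ∧ g x ≠ ∞} := by
  rw [convex_iff_forall_pos]
  rintro x ⟨hx, hgx⟩ y ⟨hy, hgy⟩ a b ha hb hab
  refine ⟨hg.1 hx hy ha.le hb.le hab, ne_top_of_le_ne_top ?_ (hg.2 hx hy ha.le hb.le hab)⟩
  exact ENNReal.add_ne_top.2 ⟨nnreal_smul_ne_top hgx, nnreal_smul_ne_top hgy⟩

end LIntegralOfConvex

section ProbabilityMeasures

variable {Ω : Type*} [MeasurableSpace Ω]

lemma convex_setOf_isProbabilityMeasure :
    Convex ℝ≥0 {μ : Measure Ω | IsProbabilityMeasure μ} := by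
  rintro μ (hμ : IsProbabilityMeasure μ) ν (hν : IsProbabilityMeasure ν) a b _ _ hab
  refine ⟨?_⟩
  rw [Measure.add_apply, Measure.smul_apply, Measure.smul_apply, measure_univ, measure_univ,
    Convex.combo_self hab]

lemma frequently_ae_of_eventually_nhdsWithin {X : Type*} [TopologicalSpace X] [MeasurableSpace X]
    {m : Measure X} [m.IsOpenPosMeasure] {U : Set X} (hU : IsOpen U) {x : X} (hx : x ∈ closure U)
    {P : X → Prop} (hP : ∀ᶠ y in nhdsWithin x U, P y) : ∃ᵐ y ∂m, P y := by
  intro hnot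
  have hmem : x ∈ closure (U ∩ {y | ¬P y}) :=
    closure_minimal ((Measure.dense_of_ae hnot).open_subset_closure_inter hU) isClosed_closure hx
  obtain ⟨y, hy, hyP⟩ := ((mem_closure_iff_frequently.1 hmem).and_eventually
    (eventually_nhdsWithin_iff.1 hP)).exists
  exact hy.2 (hyP hy.1)

end ProbabilityMeasures

section CrossingMass

open Set

/-- The mass that every coupling of `μ` and `ν` must move across the interval with endpoints `p.1`
and `p.2`, in either direction. Integrated over the plane it gives the squared Wasserstein distance
on the line, see `W2sq_eq_lintegral_crossingMass`. -/
def crossingMass (μ ν : Measure ℝ) (p : ℝ × ℝ) : ℝ≥0∞ :=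
  (μ (Iic (min p.1 p.2)) - ν (Iic (max p.1 p.2))) +
    (ν (Iic (min p.1 p.2)) - μ (Iic (max p.1 p.2)))

lemma measurable_crossingMass_uncurry {α : Type*} [MeasurableSpace α] {κ η : α → Measure ℝ}
    (hκ : Measurable fun q : α × ℝ => κ q.1 (Iic q.2))
    (hη : Measurable fun q : α × ℝ => η q.1 (Iic q.2)) :
    Measurable fun q : α × (ℝ × ℝ) => crossingMass (κ q.1) (η q.1) q.2 := by
  have hmin : Measurable fun q : α × (ℝ × ℝ) => (q.1, min q.2.1 q.2.2) := by fun_prop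
  have hmax : Measurable fun q : α × (ℝ × ℝ) => (q.1, max q.2.1 q.2.2) := by fun_prop
  exact ((hκ.comp hmin).sub (hη.comp hmax)).add ((hη.comp hmin).sub (hκ.comp hmax))

lemma measurable_measure_Iic (μ : Measure ℝ) : Measurable fun s => μ (Iic s) :=
  Monotone.measurable fun _ _ hst => measure_mono (Iic_subset_Iic.2 hst)

lemma measurable_crossingMass (μ ν : Measure ℝ) : Measurable (crossingMass μ ν) :=
  (measurable_crossingMass_uncurry (κ := fun _ : Unit => μ) (η := fun _ => ν)
    ((measurable_measure_Iic μ).comp measurable_snd)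
    ((measurable_measure_Iic ν).comp measurable_snd)).comp (measurable_prodMk_left (x := ()))

end CrossingMass

section TransportCost

open Set

lemma nnnorm_sub_sq_eq_ofReal_sub_sq_add (x y : ℝ) :
    (‖x - y‖₊ : ℝ≥0∞) ^ 2 = ENNReal.ofReal (y - x) ^ 2 + ENNReal.ofReal (x - y) ^ 2 := by
  rw [← enorm_eq_nnnorm, Real.enorm_eq_ofReal_abs]
  rcases le_total x y with h | h
  · simp [abs_of_nonpos (sub_nonpos.2 h), ENNReal.ofReal_of_nonpos (sub_nonpos.2 h)]
  · simp [abs_of_nonneg (sub_nonneg.2 h), ENNReal.ofReal_of_nonpos (sub_nonpos.2 h)]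

variable {Ω : Type*} [MeasurableSpace Ω] {f g : Ω → ℝ}

lemma measurableSet_setOf_le_min_and_max_lt (hf : Measurable f) (hg : Measurable g) :
    MeasurableSet {q : Ω × (ℝ × ℝ) | f q.1 ≤ min q.2.1 q.2.2 ∧ max q.2.1 q.2.2 < g q.1} := by
  rw [ofPred_and]
  exact (measurableSet_le (by fun_prop) (by fun_prop)).inter
    (measurableSet_lt (by fun_prop) (by fun_prop))

-- Tonelli, since `(g ω - f ω)²` is the area of the square `[f ω, g ω)²`.
lemma lintegral_ofReal_sub_sq (P : Measure Ω) [SFinite P] (hf : Measurable f) (hg : Measurable g) :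
    ∫⁻ ω, ENNReal.ofReal (g ω - f ω) ^ 2 ∂P =
      ∫⁻ p : ℝ × ℝ, P (f ⁻¹' Iic (min p.1 p.2) ∩ g ⁻¹' Ioi (max p.1 p.2)) := by
  have hS := measurableSet_setOf_le_min_and_max_lt hf hg
  have volume_slice (ω : Ω) :
      volume {p : ℝ × ℝ | f ω ≤ min p.1 p.2 ∧ max p.1 p.2 < g ω} =
        ENNReal.ofReal (g ω - f ω) ^ 2 := by
    have hsquare : {p : ℝ × ℝ | f ω ≤ min p.1 p.2 ∧ max p.1 p.2 < g ω} =
        Ico (f ω) (g ω) ×ˢ Ico (f ω) (g ω) := by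
      ext p
      simp only [mem_ofPred_eq, le_min_iff, max_lt_iff, mem_prod, mem_Ico]
      tauto
    rw [hsquare, Measure.volume_eq_prod, Measure.prod_prod, Real.volume_Ico, sq]
  calc ∫⁻ ω, ENNReal.ofReal (g ω - f ω) ^ 2 ∂P = (P.prod volume) _ := by
        rw [Measure.prod_apply hS]
        exact lintegral_congr fun ω => (volume_slice ω).symm
    _ = _ := Measure.prod_apply_symm hS

lemma lintegral_nnnorm_sub_sq (π : Measure (ℝ × ℝ)) [SFinite π] :
    ∫⁻ z, (‖z.1 - z.2‖₊ : ℝ≥0∞) ^ 2 ∂π =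
      ∫⁻ p : ℝ × ℝ, (π (Iic (min p.1 p.2) ×ˢ Ioi (max p.1 p.2)) +
        π (Ioi (max p.1 p.2) ×ˢ Iic (min p.1 p.2))) := by
  have hmeas : Measurable fun p : ℝ × ℝ => π (Iic (min p.1 p.2) ×ˢ Ioi (max p.1 p.2)) :=
    measurable_measure_prodMk_right
      (measurableSet_setOf_le_min_and_max_lt measurable_fst measurable_snd)
  have hswap (s t : ℝ) : (Ioi t ×ˢ Iic s : Set (ℝ × ℝ)) = Prod.snd ⁻¹' Iic s ∩ Prod.fst ⁻¹' Ioi t :=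
    inter_comm _ _
  simp only [nnnorm_sub_sq_eq_ofReal_sub_sq_add]
  rw [lintegral_add_left (by fun_prop), lintegral_add_left hmeas,
    lintegral_ofReal_sub_sq π measurable_fst measurable_snd,
    lintegral_ofReal_sub_sq π measurable_snd measurable_fst]
  simp only [hswap]
  rfl

namespace IsCoupling

variable {E : Type*} [MeasurableSpace E] {π : Measure (E × E)} {μ ν : Measure E}

lemma isProbabilityMeasure [IsProbabilityMeasure μ] (hπ : IsCoupling π μ ν) :
    IsProbabilityMeasure π :=
  have : IsProbabilityMeasure (π.map Prod.fst) := hπ.1 ▸ inferInstance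
  Measure.isProbabilityMeasure_of_map Prod.fst

lemma W2sq_le {E : Type*} [MeasurableSpace E] [NormedAddCommGroup E] {π : Measure (E × E)}
    {μ ν : Measure E} (hπ : IsCoupling π μ ν) :
    W2sq μ ν ≤ ∫⁻ z, (‖z.1 - z.2‖₊ : ℝ≥0∞) ^ 2 ∂π := by
  rw [W2sq]
  exact iInf₂_le π hπ

lemma measure_sub_le_prod_compl (hπ : IsCoupling π μ ν) {A B : Set E} (hA : MeasurableSet A)
    (hB : MeasurableSet B) : μ A - ν B ≤ π (A ×ˢ Bᶜ) := by
  rw [← hπ.1, ← hπ.2, Measure.map_apply measurable_fst hA, Measure.map_apply measurable_snd hB]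
  exact le_measure_sdiff

lemma measure_sub_le_compl_prod (hπ : IsCoupling π μ ν) {A B : Set E} (hA : MeasurableSet A)
    (hB : MeasurableSet B) : ν A - μ B ≤ π (Bᶜ ×ˢ A) := by
  rw [← hπ.1, ← hπ.2, Measure.map_apply measurable_snd hA, Measure.map_apply measurable_fst hB]
  exact le_measure_sdiff.trans (measure_mono fun z hz => ⟨hz.2, hz.1⟩)

end IsCoupling

lemma lintegral_crossingMass_le_W2sq (μ ν : Measure ℝ) [IsProbabilityMeasure μ] :
    ∫⁻ p, crossingMass μ ν p ≤ W2sq μ ν := by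
  refine le_iInf₂ fun π hπ => ?_
  have := hπ.isProbabilityMeasure
  rw [lintegral_nnnorm_sub_sq]
  simp only [← compl_Iic]
  exact lintegral_mono fun p => add_le_add
    (hπ.measure_sub_le_prod_compl measurableSet_Iic measurableSet_Iic)
    (hπ.measure_sub_le_compl_prod measurableSet_Iic measurableSet_Iic)

end TransportCost

section MonotoneCoupling

open Set ProbabilityTheory
open scoped Topology

/-- The quantile function of a measure on the line, that is, the generalized inverse of its
distribution function. Outside `(0, 1)` its values are junk. -/
def quantile (μ : Measure ℝ) (u : ℝ) : ℝ := sInf {x | u ≤ cdf μ x}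

lemma tendsto_cdf_nhdsGT (μ : Measure ℝ) (x : ℝ) : Tendsto (cdf μ) (𝓝[>] x) (𝓝 (cdf μ x)) :=
  ((cdf μ).right_continuous x).mono_left (nhdsWithin_mono _ Ioi_subset_Ici_self)

lemma quantile_le_iff (μ : Measure ℝ) {u : ℝ} (hu : u ∈ Ioo 0 1) (s : ℝ) :
    quantile μ u ≤ s ↔ u ≤ cdf μ s := by
  obtain ⟨x, hx⟩ := ((tendsto_cdf_atTop μ).eventually_const_lt hu.2).exists
  obtain ⟨y, hy⟩ := ((tendsto_cdf_atBot μ).eventually_lt_const hu.1).exists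
  have hbdd : BddBelow {x | u ≤ cdf μ x} :=
    ⟨y, fun z hz => le_of_not_gt fun hzy => (hy.trans_le hz).not_ge (monotone_cdf μ hzy.le)⟩
  refine ⟨fun h => ge_of_tendsto (tendsto_cdf_nhdsGT μ s) ?_, fun h => csInf_le hbdd h⟩
  filter_upwards [self_mem_nhdsWithin] with t ht
  obtain ⟨z, hz, hzt⟩ := exists_lt_of_csInf_lt ⟨x, hx.le⟩ (h.trans_lt ht)
  exact le_trans hz (monotone_cdf μ hzt.le)

lemma aemeasurable_quantile (μ : Measure ℝ) :
    AEMeasurable (quantile μ) (volume.restrict (Ioo 0 1)) :=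
  aemeasurable_restrict_of_monotoneOn measurableSet_Ioo fun _ hu _ hv huv =>
    (quantile_le_iff μ hu _).2 (huv.trans ((quantile_le_iff μ hv _).1 le_rfl))

lemma map_quantile (μ : Measure ℝ) [IsProbabilityMeasure μ] :
    (volume.restrict (Ioo 0 1)).map (quantile μ) = μ := by
  refine Measure.ext_of_Iic _ _ fun s => ?_
  have hpreimage : quantile μ ⁻¹' Iic s ∩ Ioo 0 1 = Ioo 0 1 ∩ Iic (cdf μ s) := by
    ext u
    rw [inter_comm, mem_inter_iff, mem_inter_iff]
    exact and_congr_right fun hu => quantile_le_iff μ hu s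
  have hvolume : volume (Ioo 0 1 ∩ Iic (cdf μ s)) = volume (Ioc 0 1 ∩ Iic (cdf μ s)) :=
    measure_congr (Ioo_ae_eq_Ioc.inter (ae_eq_refl _))
  rw [Measure.map_apply_of_aemeasurable (aemeasurable_quantile μ) measurableSet_Iic,
    Measure.restrict_apply' measurableSet_Ioo, hpreimage, ← ofReal_cdf,
    hvolume, Ioc_inter_Iic, min_eq_right (cdf_le_one μ s),
    Real.volume_Ioc, sub_zero]

/-- The coupling of two measures on the line by their quantile functions, optimal for convex
costs. -/
def monotoneCoupling (μ ν : Measure ℝ) : Measure (ℝ × ℝ) :=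
  (volume.restrict (Ioo 0 1)).map fun u => (quantile μ u, quantile ν u)

variable (μ ν : Measure ℝ)

lemma aemeasurable_quantile_prodMk :
    AEMeasurable (fun u => (quantile μ u, quantile ν u)) (volume.restrict (Ioo 0 1)) :=
  (aemeasurable_quantile μ).prodMk (aemeasurable_quantile ν)

variable [IsProbabilityMeasure μ] [IsProbabilityMeasure ν]

lemma isCoupling_monotoneCoupling : IsCoupling (monotoneCoupling μ ν) μ ν := by
  have h := aemeasurable_quantile_prodMk μ ν
  constructor
  · rw [monotoneCoupling, AEMeasurable.map_map_of_aemeasurable measurable_fst.aemeasurable h]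
    exact map_quantile μ
  · rw [monotoneCoupling, AEMeasurable.map_map_of_aemeasurable measurable_snd.aemeasurable h]
    exact map_quantile ν

lemma volume_quantile_le_lt_quantile_le (a b : ℝ) :
    volume.restrict (Ioo 0 1) {u | quantile μ u ≤ a ∧ b < quantile ν u} ≤
      μ (Iic a) - ν (Iic b) := by
  rw [Measure.restrict_apply' measurableSet_Ioo, ← ofReal_cdf, ← ofReal_cdf,
    ← ENNReal.ofReal_sub _ (cdf_nonneg _ _), ← Real.volume_Ioc]
  refine measure_mono ?_
  rintro u ⟨⟨hμ, hν⟩, hu⟩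
  exact ⟨lt_of_not_ge fun h => hν.not_ge ((quantile_le_iff ν hu b).2 h),
    (quantile_le_iff μ hu a).1 hμ⟩

lemma monotoneCoupling_Iic_prod_Ioi_le (a b : ℝ) :
    monotoneCoupling μ ν (Iic a ×ˢ Ioi b) ≤ μ (Iic a) - ν (Iic b) := by
  rw [monotoneCoupling, Measure.map_apply_of_aemeasurable (aemeasurable_quantile_prodMk μ ν)
    (measurableSet_Iic.prod measurableSet_Ioi)]
  exact volume_quantile_le_lt_quantile_le μ ν a b

lemma monotoneCoupling_Ioi_prod_Iic_le (a b : ℝ) :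
    monotoneCoupling μ ν (Ioi b ×ˢ Iic a) ≤ ν (Iic a) - μ (Iic b) := by
  rw [monotoneCoupling, Measure.map_apply_of_aemeasurable (aemeasurable_quantile_prodMk μ ν)
    (measurableSet_Ioi.prod measurableSet_Iic)]
  refine le_trans (measure_mono ?_) (volume_quantile_le_lt_quantile_le ν μ a b)
  exact fun u hu => ⟨hu.2, hu.1⟩

theorem W2sq_eq_lintegral_crossingMass : W2sq μ ν = ∫⁻ p, crossingMass μ ν p := by
  have hcoupling := isCoupling_monotoneCoupling μ ν
  have := hcoupling.isProbabilityMeasure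
  refine le_antisymm ?_ (lintegral_crossingMass_le_W2sq μ ν)
  calc W2sq μ ν ≤ ∫⁻ z, (‖z.1 - z.2‖₊ : ℝ≥0∞) ^ 2 ∂monotoneCoupling μ ν := hcoupling.W2sq_le
    _ = ∫⁻ p : ℝ × ℝ, (monotoneCoupling μ ν (Iic (min p.1 p.2) ×ˢ Ioi (max p.1 p.2)) +
        monotoneCoupling μ ν (Ioi (max p.1 p.2) ×ˢ Iic (min p.1 p.2))) := lintegral_nnnorm_sub_sq _
    _ ≤ ∫⁻ p, crossingMass μ ν p := lintegral_mono fun p => add_le_add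
        (monotoneCoupling_Iic_prod_Ioi_le μ ν _ _) (monotoneCoupling_Ioi_prod_Iic_le μ ν _ _)

end MonotoneCoupling

section ConvexityOnTheLine

open Set ProbabilityTheory
open scoped Topology

lemma convexOn_crossingMass (ν : Measure ℝ) (p : ℝ × ℝ) :
    ConvexOn ℝ≥0 univ fun μ => crossingMass μ ν p := by
  refine ⟨convex_univ, fun μ₁ _ μ₂ _ a b ha hb hab => ?_⟩
  simp only [crossingMass, Measure.add_apply, Measure.smul_apply, smul_add]
  rw [add_add_add_comm]
  exact add_le_add ((convexOn_tsub_const _).2 (mem_univ _) (mem_univ _) ha hb hab)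
    ((convexOn_const_tsub _).2 (mem_univ _) (mem_univ _) ha hb hab)

lemma crossingMass_convexComb_lt {μ₁ μ₂ ν : Measure ℝ} [IsFiniteMeasure μ₁] [IsFiniteMeasure μ₂]
    [IsFiniteMeasure ν] {a b : ℝ≥0} (ha : 0 < a) (hb : 0 < b) (hab : a + b = 1) {p : ℝ × ℝ}
    (h₁ : μ₁ (Iic p.1) < ν (Iic p.2)) (h₂ : ν (Iic p.2) < μ₂ (Iic p.1)) :
    crossingMass (a • μ₁ + b • μ₂) ν p < a • crossingMass μ₁ ν p + b • crossingMass μ₂ ν p := by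
  simp only [crossingMass, Measure.add_apply, Measure.smul_apply, smul_add]
  rw [add_add_add_comm]
  rcases le_total p.1 p.2 with h | h
  · simp only [min_eq_left h, max_eq_right h]
    exact ENNReal.add_lt_add_of_lt_of_le (ENNReal.sub_ne_top (measure_ne_top _ _))
      (convexComb_tsub_lt ha hb hab h₁ h₂ (measure_ne_top _ _))
      ((convexOn_const_tsub _).2 (mem_univ _) (mem_univ _) ha.le hb.le hab)
  · simp only [min_eq_right h, max_eq_left h]
    exact ENNReal.add_lt_add_of_le_of_lt (ENNReal.sub_ne_top (measure_ne_top (a • μ₁ + b • μ₂) _))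
      ((convexOn_tsub_const _).2 (mem_univ _) (mem_univ _) ha.le hb.le hab)
      (tsub_convexComb_lt ha hb hab h₁ h₂)

lemma continuous_cdf (ν : Measure ℝ) [IsProbabilityMeasure ν] [NullSingletonClass ν] :
    Continuous (cdf ν) := by
  refine continuous_iff_continuousAt.2 fun x => ?_
  have hjump : ENNReal.ofReal (cdf ν x - Function.leftLim (cdf ν) x) = 0 := by
    rw [← StieltjesFunction.measure_singleton, measure_cdf, measure_singleton]
  rw [(monotone_cdf ν).continuousAt_iff_leftLim_eq_rightLim, (cdf ν).rightLim_eq]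
  exact ((monotone_cdf ν).leftLim_le le_rfl).antisymm
    (sub_nonpos.1 (ENNReal.ofReal_eq_zero.1 hjump))

lemma exists_cdf_eq (ν : Measure ℝ) [IsProbabilityMeasure ν] [NullSingletonClass ν] {u : ℝ}
    (hu : u ∈ Ioo 0 1) : ∃ t, cdf ν t = u := by
  obtain ⟨x, hx⟩ := ((tendsto_cdf_atBot ν).eventually_lt_const hu.1).exists
  obtain ⟨y, hy⟩ := ((tendsto_cdf_atTop ν).eventually_const_lt hu.2).exists
  exact mem_range_of_exists_le_of_exists_ge (continuous_cdf ν) ⟨x, hx.le⟩ ⟨y, hy.le⟩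

lemma measure_Iic_lt_of_cdf_lt {μ ν : Measure ℝ} [IsProbabilityMeasure μ] [IsProbabilityMeasure ν]
    {s t : ℝ} (h : cdf μ s < cdf ν t) : μ (Iic s) < ν (Iic t) := by
  rw [← ofReal_cdf, ← ofReal_cdf]
  exact (ENNReal.ofReal_lt_ofReal_iff_of_nonneg (cdf_nonneg μ s)).2 h

variable {ν : Measure ℝ} [IsProbabilityMeasure ν]

-- A level of the distribution function of `ν` strictly between those of `μ₁` and `μ₂` at `s₀`
-- is attained because `ν` has no atoms, and the three values stay in this order just to the right.
lemma frequently_ae_crossingMass_convexComb_lt [NullSingletonClass ν] {μ₁ μ₂ : Measure ℝ}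
    [IsProbabilityMeasure μ₁] [IsProbabilityMeasure μ₂] {s₀ : ℝ} (hs₀ : cdf μ₁ s₀ < cdf μ₂ s₀)
    {a b : ℝ≥0} (ha : 0 < a) (hb : 0 < b) (hab : a + b = 1) :
    ∃ᵐ p : ℝ × ℝ,
      crossingMass (a • μ₁ + b • μ₂) ν p < a • crossingMass μ₁ ν p + b • crossingMass μ₂ ν p := by
  obtain ⟨u, hu₁, hu₂⟩ := exists_between hs₀
  obtain ⟨t₀, rfl⟩ := exists_cdf_eq ν
    ⟨(cdf_nonneg μ₁ s₀).trans_lt hu₁, hu₂.trans_le (cdf_le_one μ₂ s₀)⟩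
  have hclosure : (s₀, t₀) ∈ closure (Ioi s₀ ×ˢ Ioi t₀) := by
    simp [closure_prod_eq]
  refine frequently_ae_of_eventually_nhdsWithin (isOpen_Ioi.prod isOpen_Ioi) hclosure ?_
  rw [nhdsWithin_prod_eq]
  have hright₁ : ∀ᶠ s in 𝓝[>] s₀, s₀ < s ∧ cdf μ₁ s < cdf ν t₀ :=
    eventually_mem_nhdsWithin.and ((tendsto_cdf_nhdsGT μ₁ s₀).eventually_lt_const hu₁)
  have hright : ∀ᶠ t in 𝓝[>] t₀, t₀ < t ∧ cdf ν t < cdf μ₂ s₀ :=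
    eventually_mem_nhdsWithin.and ((tendsto_cdf_nhdsGT ν t₀).eventually_lt_const hu₂)
  filter_upwards [hright₁.prod_mk hright] with p ⟨⟨hs, h₁⟩, ht, h₂⟩
  exact crossingMass_convexComb_lt ha hb hab
    (measure_Iic_lt_of_cdf_lt (h₁.trans_le (monotone_cdf ν ht.le)))
    (measure_Iic_lt_of_cdf_lt (h₂.trans_le (monotone_cdf μ₂ hs.le)))

variable (ν)

lemma convexOn_W2sq : ConvexOn ℝ≥0 {μ : Measure ℝ | IsProbabilityMeasure μ} (W2sq · ν) :=
  (convexOn_lintegral convex_setOf_isProbabilityMeasure (fun μ _ => measurable_crossingMass μ ν)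
    fun p => (convexOn_crossingMass ν p).subset (subset_univ _)
      convex_setOf_isProbabilityMeasure).congr
    fun μ (_ : IsProbabilityMeasure μ) => (W2sq_eq_lintegral_crossingMass μ ν).symm

theorem strictConvexOn_W2sq [NullSingletonClass ν] :
    StrictConvexOn ℝ≥0 {μ : Measure ℝ | IsProbabilityMeasure μ ∧ W2sq μ ν ≠ ∞} (W2sq · ν) := by
  have hconv := convex_setOf_and_ne_top (convexOn_W2sq ν)
  have heq : ∀ μ ∈ {μ : Measure ℝ | IsProbabilityMeasure μ ∧ W2sq μ ν ≠ ∞},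
      ∫⁻ p, crossingMass μ ν p = W2sq μ ν :=
    fun μ ⟨_, _⟩ => (W2sq_eq_lintegral_crossingMass μ ν).symm
  refine (strictConvexOn_lintegral hconv (fun μ _ => measurable_crossingMass μ ν)
    (fun μ hμ => (heq μ hμ).trans_ne hμ.2)
    (fun p => (convexOn_crossingMass ν p).subset (subset_univ _) hconv) ?_).congr heq
  rintro μ₁ ⟨hμ₁ : IsProbabilityMeasure μ₁, -⟩ μ₂ ⟨hμ₂ : IsProbabilityMeasure μ₂, -⟩ hne
    a b ha hb hab
  obtain ⟨s, hs⟩ : ∃ s, cdf μ₁ s ≠ cdf μ₂ s := by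
    by_contra! h
    exact hne (Measure.eq_of_cdf _ _ (StieltjesFunction.ext h))
  rcases hs.lt_or_gt with hlt | hgt
  · exact frequently_ae_crossingMass_convexComb_lt hlt ha hb hab
  · simpa only [add_comm] using frequently_ae_crossingMass_convexComb_lt hgt hb ha
      ((add_comm b a).trans hab)

end ConvexityOnTheLine

section ContinuityOnTheLine

open Set
open scoped Topology

variable {l r : ℝ}

lemma crossingMass_le_indicator {μ ν : Measure ℝ} [IsProbabilityMeasure μ] [IsProbabilityMeasure ν]
    (hμ : μ (Icc l r)ᶜ = 0) (hν : ν (Icc l r)ᶜ = 0) (p : ℝ × ℝ) :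
    crossingMass μ ν p ≤ (Icc l r ×ˢ Icc l r).indicator (fun _ => 2) p := by
  by_cases hp : p ∈ Icc l r ×ˢ Icc l r
  · rw [indicator_of_mem hp, crossingMass, ← one_add_one_eq_two]
    exact add_le_add (tsub_le_self.trans prob_le_one) (tsub_le_self.trans prob_le_one)
  have hout : min p.1 p.2 < l ∨ r < max p.1 p.2 := by
    simp only [mem_prod, mem_Icc] at hp
    simp only [min_lt_iff, lt_max_iff]
    grind
  have measure_Iic_eq_zero {α : Measure ℝ} {s : ℝ} (hα : α (Icc l r)ᶜ = 0) (hs : s < l) :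
      α (Iic s) = 0 :=
    measure_mono_null (t := (Icc l r)ᶜ) (fun _ hx hxI => hs.not_ge (hxI.1.trans hx)) hα
  have measure_Iic_eq_one {α : Measure ℝ} [IsProbabilityMeasure α] {s : ℝ}
      (hα : α (Icc l r)ᶜ = 0) (hs : r < s) : α (Iic s) = 1 :=
    (prob_compl_eq_zero_iff measurableSet_Iic).1
      (measure_mono_null (t := (Icc l r)ᶜ) (fun _ hx hxI => hx (hxI.2.trans hs.le)) hα)
  rw [indicator_of_notMem hp, crossingMass]
  rcases hout with h | h
  · simp [measure_Iic_eq_zero hμ h, measure_Iic_eq_zero hν h]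
  · simp [measure_Iic_eq_one hμ h, measure_Iic_eq_one hν h, tsub_eq_zero_of_le, prob_le_one]

variable (l r) in
lemma lintegral_indicator_Icc_prod_Icc :
    ∫⁻ p : ℝ × ℝ, (Icc l r ×ˢ Icc l r).indicator (fun _ => 2) p =
      2 * ENNReal.ofReal (r - l) ^ 2 := by
  rw [lintegral_indicator_const (measurableSet_Icc.prod measurableSet_Icc), Measure.volume_eq_prod,
    Measure.prod_prod, Real.volume_Icc, sq]

lemma W2sq_le_of_measure_compl_Icc_eq_zero {μ ν : Measure ℝ} [IsProbabilityMeasure μ]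
    [IsProbabilityMeasure ν] (hμ : μ (Icc l r)ᶜ = 0) (hν : ν (Icc l r)ᶜ = 0) :
    W2sq μ ν ≤ 2 * ENNReal.ofReal (r - l) ^ 2 := by
  rw [W2sq_eq_lintegral_crossingMass, ← lintegral_indicator_Icc_prod_Icc]
  exact lintegral_mono (crossingMass_le_indicator hμ hν)

lemma ae_measure_singleton_eq_zero (μ : Measure ℝ) [SFinite μ] : ∀ᵐ t : ℝ, μ {t} = 0 := by
  have hcountable : {t : ℝ | 0 < μ {x | x = t}}.Countable :=
    Measure.countable_meas_level_set_pos measurable_id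
  filter_upwards [hcountable.ae_notMem volume] with t ht
  simpa using ht

lemma ae_tendsto_crossingMass {ι : Type*} {L : Filter ι} {μs : ι → ProbabilityMeasure ℝ}
    {μ : ProbabilityMeasure ℝ} (hμs : Tendsto μs L (𝓝 μ)) (ν : Measure ℝ) [IsFiniteMeasure ν] :
    ∀ᵐ p : ℝ × ℝ,
      Tendsto (fun i => crossingMass (μs i) ν p) L (𝓝 (crossingMass μ ν p)) := by
  have tendsto_Iic {t : ℝ} (ht : (μ : Measure ℝ) {t} = 0) :
      Tendsto (fun i => (μs i : Measure ℝ) (Iic t)) L (𝓝 ((μ : Measure ℝ) (Iic t))) :=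
    ProbabilityMeasure.tendsto_measure_of_null_frontier_of_tendsto' hμs (by rwa [frontier_Iic])
  have hae := ae_measure_singleton_eq_zero (μ : Measure ℝ)
  filter_upwards [Measure.quasiMeasurePreserving_fst.ae hae,
    Measure.quasiMeasurePreserving_snd.ae hae] with p hfst hsnd
  have hmin : (μ : Measure ℝ) {min p.1 p.2} = 0 := by
    rcases min_choice p.1 p.2 with h | h <;> rwa [h]
  have hmax : (μ : Measure ℝ) {max p.1 p.2} = 0 := by
    rcases max_choice p.1 p.2 with h | h <;> rwa [h]
  exact (ENNReal.Tendsto.sub (tendsto_Iic hmin) tendsto_const_nhds (.inl (measure_ne_top _ _))).add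
    (ENNReal.Tendsto.sub tendsto_const_nhds (tendsto_Iic hmax) (.inl (measure_ne_top _ _)))

lemma continuousOn_W2sq {ν : Measure ℝ} [IsProbabilityMeasure ν] (hν : ν (Icc l r)ᶜ = 0) :
    ContinuousOn (fun μ : ProbabilityMeasure ℝ => W2sq μ.toMeasure ν)
      {μ | μ.toMeasure (Icc l r)ᶜ = 0} := by
  intro μ _
  simp only [ContinuousWithinAt, W2sq_eq_lintegral_crossingMass]
  refine tendsto_lintegral_filter_of_dominated_convergence
    ((Icc l r ×ˢ Icc l r).indicator fun _ => 2)
    (.of_forall fun α => measurable_crossingMass _ _) ?_ ?_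
    (ae_tendsto_crossingMass (tendsto_id.mono_left nhdsWithin_le_nhds) ν)
  · filter_upwards [self_mem_nhdsWithin] with α hα
    exact .of_forall (crossingMass_le_indicator hα hν)
  · rw [lintegral_indicator_Icc_prod_Icc]
    finiteness

end ContinuityOnTheLine

section SlicedWasserstein

open Set

variable {d : ℕ}

lemma continuous_proj (θ : Ed d) : Continuous (proj θ) := by
  unfold proj
  fun_prop

instance isProbabilityMeasure_map_proj (μ : Measure (Ed d)) [IsProbabilityMeasure μ] (θ : Ed d) :
    IsProbabilityMeasure (μ.map (proj θ)) :=
  Measure.isProbabilityMeasure_map (continuous_proj θ).aemeasurable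

instance isFiniteMeasure_unifSphere : IsFiniteMeasure (unifSphere d) :=
  ⟨(ENNReal.inv_mul_le_one _).trans_lt ENNReal.one_lt_top⟩

lemma measurable_map_proj_Iic (μ : Measure (Ed d)) [SFinite μ] :
    Measurable fun q : sphere (0 : Ed d) 1 × ℝ => μ.map (proj (q.1 : Ed d)) (Iic q.2) := by
  have hset : MeasurableSet
      {z : (sphere (0 : Ed d) 1 × ℝ) × Ed d | ⟪z.2, (z.1.1 : Ed d)⟫ ≤ z.1.2} :=
    measurableSet_le (by fun_prop) (by fun_prop)
  simp only [Measure.map_apply (continuous_proj _).measurable measurableSet_Iic]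
  exact measurable_measure_prodMk_left hset

lemma measurable_W2sq_map_proj (μ ν : Measure (Ed d)) [IsProbabilityMeasure μ]
    [IsProbabilityMeasure ν] :
    Measurable fun θ : sphere (0 : Ed d) 1 =>
      W2sq (μ.map (proj (θ : Ed d))) (ν.map (proj (θ : Ed d))) := by
  simp only [W2sq_eq_lintegral_crossingMass]
  exact (measurable_crossingMass_uncurry
    (κ := fun θ : sphere (0 : Ed d) 1 => μ.map (proj (θ : Ed d)))
    (η := fun θ : sphere (0 : Ed d) 1 => ν.map (proj (θ : Ed d)))
    (measurable_map_proj_Iic μ) (measurable_map_proj_Iic ν)).lintegral_prod_right'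

lemma charFun_map_proj (μ : Measure (Ed d)) (θ : Ed d) (r : ℝ) :
    charFun (μ.map (proj θ)) r = charFun μ (r • θ) := by
  rw [charFun_apply, charFun_apply,
    integral_map (continuous_proj θ).aemeasurable (by fun_prop)]
  simp [proj, inner_smul_right]

-- Cramér–Wold: characteristic functions are continuous, so a dense set of directions suffices.
theorem eq_of_ae_map_proj_eq {μ ν : Measure (Ed d)} [IsProbabilityMeasure μ]
    [IsProbabilityMeasure ν] (h : ∀ᵐ θ : sphere (0 : Ed d) 1 ∂unifSphere d,
      μ.map (proj (θ : Ed d)) = ν.map (proj (θ : Ed d))) : μ = ν := by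
  rw [unifSphere, Measure.ae_ennreal_smul_measure_eq
    (ENNReal.inv_ne_zero.2 (measure_ne_top _ _))] at h
  have hcharFun (r : ℝ) : (fun θ : sphere (0 : Ed d) 1 => charFun μ (r • (θ : Ed d))) =
      fun θ : sphere (0 : Ed d) 1 => charFun ν (r • (θ : Ed d)) := by
    refine Continuous.ext_on (Measure.dense_of_ae h) (continuous_charFun.comp (by fun_prop))
      (continuous_charFun.comp (by fun_prop))
      fun θ (hθ : μ.map (proj (θ : Ed d)) = ν.map (proj (θ : Ed d))) => ?_
    simp only [← charFun_map_proj, hθ]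
  refine Measure.ext_of_charFun (funext fun x => ?_)
  rcases eq_or_ne x 0 with rfl | hx
  · simp
  · have hnorm : ‖x‖ ≠ 0 := norm_ne_zero_iff.2 hx
    have := congrFun (hcharFun ‖x‖) ⟨‖x‖⁻¹ • x, by simp [norm_smul, hnorm]⟩
    simpa [smul_smul, hnorm] using this

lemma map_proj_compl_Icc_eq_zero {K : Set (Ed d)} {R : ℝ} (hR : K ⊆ closedBall 0 R)
    {μ : Measure (Ed d)} (hμ : μ Kᶜ = 0) (θ : sphere (0 : Ed d) 1) :
    μ.map (proj (θ : Ed d)) (Icc (-R) R)ᶜ = 0 := by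
  rw [Measure.map_apply (continuous_proj _).measurable measurableSet_Icc.compl]
  refine measure_mono_null (t := Kᶜ) (fun x hx hxK => hx (abs_le.1 ?_)) hμ
  calc |⟪x, (θ : Ed d)⟫| ≤ ‖x‖ * ‖(θ : Ed d)‖ := abs_real_inner_le_norm x _
    _ = ‖x‖ := by simp
    _ ≤ R := by simpa using hR hxK

lemma SW2sq_ne_top_of_isBounded {K : Set (Ed d)} (hK : Bornology.IsBounded K) {μ ν : Measure (Ed d)}
    [IsProbabilityMeasure μ] [IsProbabilityMeasure ν] (hμ : μ Kᶜ = 0) (hν : ν Kᶜ = 0) :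
    SW2sq μ ν ≠ ∞ := by
  obtain ⟨R, hR⟩ := hK.subset_closedBall 0
  refine ne_top_of_le_ne_top ?_ (lintegral_mono fun θ => W2sq_le_of_measure_compl_Icc_eq_zero
    (map_proj_compl_Icc_eq_zero hR hμ θ) (map_proj_compl_Icc_eq_zero hR hν θ))
  rw [lintegral_const]
  finiteness

lemma continuousOn_SW2sq {K : Set (Ed d)} (hK : Bornology.IsBounded K) {ν : Measure (Ed d)}
    [IsProbabilityMeasure ν] (hν : ν Kᶜ = 0) :
    ContinuousOn (fun μ : ProbabilityMeasure (Ed d) => SW2sq μ.toMeasure ν)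
      {μ | μ.toMeasure Kᶜ = 0} := by
  obtain ⟨R, hR⟩ := hK.subset_closedBall 0
  intro μ hμ
  refine tendsto_lintegral_filter_of_dominated_convergence
    (fun _ => 2 * ENNReal.ofReal (R - -R) ^ 2)
    (.of_forall fun α => measurable_W2sq_map_proj _ _) ?_ ?_ (.of_forall fun θ => ?_)
  · filter_upwards [self_mem_nhdsWithin] with α hα
    exact .of_forall fun θ => W2sq_le_of_measure_compl_Icc_eq_zero
      (map_proj_compl_Icc_eq_zero hR hα θ) (map_proj_compl_Icc_eq_zero hR hν θ)
  · rw [lintegral_const]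
    finiteness
  · have hmap : ContinuousOn (fun α : ProbabilityMeasure (Ed d) =>
        α.map (continuous_proj (θ : Ed d)).aemeasurable) {α | α.toMeasure Kᶜ = 0} :=
      (ProbabilityMeasure.continuous_map (continuous_proj _)).continuousOn
    exact (continuousOn_W2sq (map_proj_compl_Icc_eq_zero hR hν θ)).comp hmap
      (fun α hα => map_proj_compl_Icc_eq_zero hR hα θ) μ hμ

lemma map_proj_absolutelyContinuous {ν : Measure (Ed d)} (hν : ν ≪ volume) {θ : Ed d}
    (hθ : θ ≠ 0) : ν.map (proj θ) ≪ volume := by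
  have hproj : proj θ = innerₛₗ ℝ θ := funext fun x => real_inner_comm θ x
  have hsurj : Function.Surjective (innerₛₗ ℝ θ) :=
    LinearMap.surjective fun h =>
      hθ ((inner_self_eq_zero (𝕜 := ℝ)).1 (by simpa using congrArg (· θ) h))
  obtain ⟨c, -, hc⟩ := (innerₛₗ ℝ θ).exists_map_addHaar_eq_smul_addHaar volume volume hsurj
  have hvolume : volume.map (proj θ) ≪ volume := by
    rw [hproj, hc]
    exact Measure.smul_absolutelyContinuous
  exact (hν.map (continuous_proj θ).measurable).trans hvolume

lemma nullSingletonClass_map_proj {ν : Measure (Ed d)} (hν : ν ≪ volume)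
    (θ : sphere (0 : Ed d) 1) : NullSingletonClass (ν.map (proj (θ : Ed d))) :=
  ⟨fun x => map_proj_absolutelyContinuous hν (ne_zero_of_mem_unit_sphere θ) (measure_singleton x)⟩

lemma map_proj_smul_add_smul (μ₁ μ₂ : Measure (Ed d)) (a b : ℝ≥0) (θ : Ed d) :
    (a • μ₁ + b • μ₂).map (proj θ) = a • μ₁.map (proj θ) + b • μ₂.map (proj θ) := by
  rw [Measure.map_add _ _ (continuous_proj θ).measurable, Measure.map_smul, Measure.map_smul]

variable (ν : Measure (Ed d)) [IsProbabilityMeasure ν]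

lemma convexOn_W2sq_map_proj (θ : Ed d) :
    ConvexOn ℝ≥0 {μ : Measure (Ed d) | IsProbabilityMeasure μ}
      fun μ => W2sq (μ.map (proj θ)) (ν.map (proj θ)) := by
  refine ⟨convex_setOf_isProbabilityMeasure, ?_⟩
  rintro μ₁ (_ : IsProbabilityMeasure μ₁) μ₂ (_ : IsProbabilityMeasure μ₂) a b ha hb hab
  simp only [map_proj_smul_add_smul]
  exact (convexOn_W2sq _).2 (isProbabilityMeasure_map_proj μ₁ θ)
    (isProbabilityMeasure_map_proj μ₂ θ) ha hb hab

lemma convexOn_SW2sq : ConvexOn ℝ≥0 {μ : Measure (Ed d) | IsProbabilityMeasure μ} (SW2sq · ν) :=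
  convexOn_lintegral convex_setOf_isProbabilityMeasure
    (fun μ (_ : IsProbabilityMeasure μ) => measurable_W2sq_map_proj μ ν)
    fun θ => convexOn_W2sq_map_proj ν θ

theorem strictConvexOn_SW2sq
    (hν : ∀ᵐ θ : sphere (0 : Ed d) 1 ∂unifSphere d,
      NullSingletonClass (ν.map (proj (θ : Ed d)))) :
    StrictConvexOn ℝ≥0 {μ : Measure (Ed d) | IsProbabilityMeasure μ ∧ SW2sq μ ν ≠ ∞}
      (SW2sq · ν) := by
  have hconv := convex_setOf_and_ne_top (convexOn_SW2sq ν)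
  refine strictConvexOn_lintegral hconv (fun μ ⟨_, _⟩ => measurable_W2sq_map_proj μ ν)
    (fun μ hμ => hμ.2) (fun θ => (convexOn_W2sq_map_proj ν θ).subset (fun μ hμ => hμ.1) hconv) ?_
  rintro μ₁ ⟨hμ₁ : IsProbabilityMeasure μ₁, hfin₁⟩ μ₂ ⟨hμ₂ : IsProbabilityMeasure μ₂, hfin₂⟩ hne
    a b ha hb hab hnot
  refine hne (eq_of_ae_map_proj_eq ?_)
  filter_upwards [hν, hnot, ae_lt_top (measurable_W2sq_map_proj μ₁ ν) hfin₁,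
    ae_lt_top (measurable_W2sq_map_proj μ₂ ν) hfin₂] with θ _ hθ hθ₁ hθ₂
  rw [map_proj_smul_add_smul] at hθ
  by_contra hneθ
  exact hθ ((strictConvexOn_W2sq _).2 ⟨isProbabilityMeasure_map_proj μ₁ θ, hθ₁.ne⟩
    ⟨isProbabilityMeasure_map_proj μ₂ θ, hθ₂.ne⟩ hneθ ha hb hab)

end SlicedWasserstein

section MinimizingMovement

variable {d : ℕ} {K : Set (Ed d)}

lemma memP2_iff_of_isBounded (hK : Bornology.IsBounded K) {μ : Measure (Ed d)}
    [IsProbabilityMeasure μ] : MemP2 K μ ↔ μ Kᶜ = 0 := by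
  refine ⟨fun h => h.2.1, fun h => ⟨inferInstance, h, ?_⟩⟩
  obtain ⟨R, hR⟩ := hK.subset_closedBall 0
  have hbound : ∀ᵐ x ∂μ, (‖x‖₊ : ℝ≥0∞) ^ 2 ≤ ENNReal.ofReal R ^ 2 := by
    filter_upwards [show ∀ᵐ x ∂μ, x ∈ K from h] with x hx
    rw [← enorm_eq_nnnorm, ← ofReal_norm]
    gcongr
    simpa using hR hx
  exact (lintegral_mono_ae hbound).trans_lt (by simp)

lemma setOf_memP2_eq (hK : Bornology.IsBounded K) :
    {μ : ProbabilityMeasure (Ed d) | MemP2 K μ.toMeasure} = {μ | μ.toMeasure Kᶜ = 0} :=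
  Set.ext fun _ => memP2_iff_of_isBounded hK

lemma isCompact_setOf_memP2 (hK : IsCompact K) :
    IsCompact {μ : ProbabilityMeasure (Ed d) | MemP2 K μ.toMeasure} := by
  rw [setOf_memP2_eq hK.isBounded]
  simpa using isCompact_setOfPred_probabilityMeasure_mass_eq_compl_isCompact_le (u := fun _ => 0)
    (K := fun _ => K) tendsto_const_nhds (fun _ => hK) (Or.inr monotone_const)

lemma MemP2.convexComb (hK : Bornology.IsBounded K) {μ₁ μ₂ : Measure (Ed d)} (h₁ : MemP2 K μ₁)
    (h₂ : MemP2 K μ₂) {a b : ℝ≥0} (hab : a + b = 1) : MemP2 K (a • μ₁ + b • μ₂) := by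
  have : IsProbabilityMeasure (a • μ₁ + b • μ₂) :=
    convex_setOf_isProbabilityMeasure h₁.1 h₂.1 zero_le zero_le hab
  exact (memP2_iff_of_isBounded hK).2 (by simp [h₁.2.1, h₂.2.1])

lemma MemP2.SW2sq_ne_top (hK : Bornology.IsBounded K) {μ ν : Measure (Ed d)} (hμ : MemP2 K μ)
    (hν : MemP2 K ν) : SW2sq μ ν ≠ ∞ :=
  have := hμ.1
  have := hν.1
  SW2sq_ne_top_of_isBounded hK hμ.2.1 hν.2.1

/-- The functional `SW₂²(·, ν) / (2τ) + F` that is minimized in one step, started at `ν`, of the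
minimizing movement scheme for `F` with time step `τ`. It is meaningful only where
`SW2sq μ ν ≠ ∞`. -/
def swjkoObjective (F : ProbabilityMeasure (Ed d) → ℝ) (τ : ℝ) (ν : Measure (Ed d))
    (μ : ProbabilityMeasure (Ed d)) : ℝ :=
  (SW2sq μ.toMeasure ν).toReal / (2 * τ) + F μ

variable {F : ProbabilityMeasure (Ed d) → ℝ} {τ : ℝ} {ν : Measure (Ed d)}

lemma lowerSemicontinuousOn_swjkoObjective (hK : Bornology.IsBounded K)
    (hF : LowerSemicontinuousOn F {μ : ProbabilityMeasure (Ed d) | MemP2 K μ.toMeasure})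
    (hν : MemP2 K ν) :
    LowerSemicontinuousOn (swjkoObjective F τ ν)
      {μ : ProbabilityMeasure (Ed d) | MemP2 K μ.toMeasure} := by
  have := hν.1
  have hcont := continuousOn_SW2sq hK hν.2.1
  rw [← setOf_memP2_eq hK] at hcont
  refine LowerSemicontinuousOn.add (ContinuousOn.lowerSemicontinuousOn ?_) hF
  exact ContinuousOn.div_const (fun μ hμ =>
    (ENNReal.tendsto_toReal (hμ.SW2sq_ne_top hK hν)).comp (hcont μ hμ)) _

lemma exists_isMinOn_swjkoObjective (hK : IsCompact K)
    (hF : LowerSemicontinuousOn F {μ : ProbabilityMeasure (Ed d) | MemP2 K μ.toMeasure})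
    (hν : MemP2 K ν) :
    ∃ μ : ProbabilityMeasure (Ed d), MemP2 K μ.toMeasure ∧ IsMinOn (swjkoObjective F τ ν)
      {μ : ProbabilityMeasure (Ed d) | MemP2 K μ.toMeasure} μ :=
  LowerSemicontinuousOn.exists_isMinOn ⟨⟨ν, hν.1⟩, hν⟩ (isCompact_setOf_memP2 hK)
    (lowerSemicontinuousOn_swjkoObjective hK.isBounded hF hν)

lemma toReal_SW2sq_convexComb_lt [IsProbabilityMeasure ν]
    (hproj : ∀ᵐ θ : sphere (0 : Ed d) 1 ∂unifSphere d,
      NullSingletonClass (ν.map (proj (θ : Ed d))))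
    {μ₁ μ₂ : Measure (Ed d)} [IsProbabilityMeasure μ₁] [IsProbabilityMeasure μ₂]
    (hfin₁ : SW2sq μ₁ ν ≠ ∞) (hfin₂ : SW2sq μ₂ ν ≠ ∞) (hne : μ₁ ≠ μ₂)
    {a b : ℝ≥0} (ha : 0 < a) (hb : 0 < b) (hab : a + b = 1) :
    (SW2sq (a • μ₁ + b • μ₂) ν).toReal < a * (SW2sq μ₁ ν).toReal + b * (SW2sq μ₂ ν).toReal := by
  have hlt := (strictConvexOn_SW2sq ν hproj).2 ⟨‹_›, hfin₁⟩ ⟨‹_›, hfin₂⟩ hne ha hb hab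
  have ha_fin : a • SW2sq μ₁ ν ≠ ∞ := nnreal_smul_ne_top hfin₁
  have hb_fin : b • SW2sq μ₂ ν ≠ ∞ := nnreal_smul_ne_top hfin₂
  calc (SW2sq (a • μ₁ + b • μ₂) ν).toReal < (a • SW2sq μ₁ ν + b • SW2sq μ₂ ν).toReal :=
        ENNReal.toReal_strict_mono (ENNReal.add_ne_top.2 ⟨ha_fin, hb_fin⟩) hlt
    _ = a * (SW2sq μ₁ ν).toReal + b * (SW2sq μ₂ ν).toReal := by
        rw [ENNReal.toReal_add ha_fin hb_fin]
        simp only [ENNReal.smul_def, smul_eq_mul, ENNReal.toReal_mul, ENNReal.coe_toReal]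

lemma swjkoObjective_convexComb_lt (hK : Bornology.IsBounded K) (hτ : 0 < τ) (hν : MemP2 K ν)
    (hproj : ∀ᵐ θ : sphere (0 : Ed d) 1 ∂unifSphere d,
      NullSingletonClass (ν.map (proj (θ : Ed d))))
    {μ₁ μ₂ σ : ProbabilityMeasure (Ed d)} (h₁ : MemP2 K μ₁.toMeasure) (h₂ : MemP2 K μ₂.toMeasure)
    (hne : μ₁ ≠ μ₂) {a b : ℝ≥0} (ha : 0 < a) (hb : 0 < b) (hab : a + b = 1)
    (hσ : σ.toMeasure = a • μ₁.toMeasure + b • μ₂.toMeasure) (hF : F σ ≤ a * F μ₁ + b * F μ₂) :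
    swjkoObjective F τ ν σ < a * swjkoObjective F τ ν μ₁ + b * swjkoObjective F τ ν μ₂ := by
  have := hν.1
  have hlt := toReal_SW2sq_convexComb_lt hproj (h₁.SW2sq_ne_top hK hν) (h₂.SW2sq_ne_top hK hν)
    (fun h => hne (Subtype.ext h)) ha hb hab
  unfold swjkoObjective
  rw [hσ]
  calc (SW2sq (a • μ₁.toMeasure + b • μ₂.toMeasure) ν).toReal / (2 * τ) + F σ
      < (a * (SW2sq μ₁.toMeasure ν).toReal + b * (SW2sq μ₂.toMeasure ν).toReal) / (2 * τ) +
          (a * F μ₁ + b * F μ₂) := add_lt_add_of_lt_of_le (by gcongr) hF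
    _ = _ := by ring

theorem swjko_step_unique_minimizer_of_convex_general (hK : IsCompact K)
    (hFlsc : LowerSemicontinuousOn F {μ : ProbabilityMeasure (Ed d) | MemP2 K μ.toMeasure})
    (hFconv : ∀ (t : ℝ≥0), t ≤ 1 → ∀ μ₁ μ₂ σ : ProbabilityMeasure (Ed d),
      MemP2 K μ₁.toMeasure → MemP2 K μ₂.toMeasure →
      σ.toMeasure = t • μ₁.toMeasure + (1 - t) • μ₂.toMeasure →
      F σ ≤ (t : ℝ) * F μ₁ + (1 - (t : ℝ)) * F μ₂)
    (hτ : 0 < τ) (hν : MemP2 K ν)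
    (hproj : ∀ᵐ θ : sphere (0 : Ed d) 1 ∂unifSphere d,
      NullSingletonClass (ν.map (proj (θ : Ed d)))) :
    ∃! μ : ProbabilityMeasure (Ed d), MemP2 K μ.toMeasure ∧
      ∀ α : ProbabilityMeasure (Ed d), MemP2 K α.toMeasure →
        swjkoObjective F τ ν μ ≤ swjkoObjective F τ ν α := by
  obtain ⟨μ, hμ, hmin⟩ := exists_isMinOn_swjkoObjective (τ := τ) hK hFlsc hν
  refine ⟨μ, ⟨hμ, fun α hα => hmin hα⟩, fun α ⟨hα, hαmin⟩ => ?_⟩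
  by_contra hne
  have hhalf : (2⁻¹ : ℝ≥0) + (1 - 2⁻¹) = 1 := add_tsub_cancel_of_le (by norm_num)
  have hmid := hα.convexComb hK.isBounded hμ hhalf
  let σ : ProbabilityMeasure (Ed d) := ⟨_, hmid.1⟩
  have hlt := swjkoObjective_convexComb_lt hK.isBounded hτ hν hproj hα hμ hne (σ := σ)
    (F := F) (by norm_num) (tsub_pos_of_lt (by norm_num)) hhalf rfl
    (by simpa using hFconv 2⁻¹ (by norm_num) α μ σ hα hμ rfl)
  have hασ : swjkoObjective F τ ν α ≤ swjkoObjective F τ ν σ := hαmin σ hmid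
  have hμσ : swjkoObjective F τ ν μ ≤ swjkoObjective F τ ν σ := hmin hmid
  refine hlt.not_ge ?_
  calc _ ≤ _ * swjkoObjective F τ ν σ + _ * swjkoObjective F τ ν σ := by gcongr
    _ = swjkoObjective F τ ν σ := by
        rw [← add_mul, ← NNReal.coe_add, hhalf, NNReal.coe_one, one_mul]

end MinimizingMovement

/-- For K compact, F lower semicontinuous and convex, τ > 0 and μ_k ∈ P_2(K)
absolutely continuous w.r.t. the Lebesgue measure, the SW-JKO step has a unique minimizer. -/
theorem swjko_step_unique_minimizer_of_convex (d : ℕ) (K : Set (Ed d)) (hK : IsCompact K)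
    (F : ProbabilityMeasure (Ed d) → ℝ)
    (hFlsc : LowerSemicontinuousOn F {μ : ProbabilityMeasure (Ed d) | MemP2 K μ.toMeasure})
    (hFconv : ∀ (t : ℝ≥0), t ≤ 1 → ∀ μ ν σ : ProbabilityMeasure (Ed d),
      σ.toMeasure = t • μ.toMeasure + (1 - t) • ν.toMeasure →
      F σ ≤ (t : ℝ) * F μ + (1 - (t : ℝ)) * F ν)
    (τ : ℝ) (hτ : 0 < τ)
    (μk : ProbabilityMeasure (Ed d)) (hμk : MemP2 K μk.toMeasure)
    (hac : μk.toMeasure ≪ (volume : Measure (Ed d))) :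
    ∃! μ : ProbabilityMeasure (Ed d), MemP2 K μ.toMeasure ∧
      ∀ ν : ProbabilityMeasure (Ed d), MemP2 K ν.toMeasure →
        (SW2sq μ.toMeasure μk.toMeasure).toReal / (2 * τ) + F μ ≤
          (SW2sq ν.toMeasure μk.toMeasure).toReal / (2 * τ) + F ν :=
  swjko_step_unique_minimizer_of_convex_general hK hFlsc
    (fun t ht μ ν σ _ _ => hFconv t ht μ ν σ) hτ hμk
    (.of_forall fun θ => nullSingletonClass_map_proj hac θ)
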